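/- For all real numbers α > 0, β > 0 and every real number m, the modified extension of the classical beta function satisfies the summation relation B(α, β; m) = Σ_{n=0}^∞ B(α+n, β+1; m). -/

import Mathlib

/-!
For `0 ≤ t < 1` the geometric series gives `∑ tⁿ (1 - t) = 1`. Multiplying the integrand of
`mecbf α β m` by the `n`-th term of this partition of unity raises `α` by `n` and `β` by `1`.
As the terms are nonnegative with sum `1`, the integrand dominates its own expansion, which may
therefore be integrated term by term.
-/

open MeasureTheory Real

/-- The modified extension of the classical beta function (MECBF). -/
noncomputable def mecbf (α β m : ℝ) : ℝ :=
  ∫ t in (0:ℝ)..1, t ^ (α - 1) * (1 - t) ^ (β - 1) * Real.exp (m * t * (1 - t))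

open Set

lemma hasSum_pow_mul_one_sub {r : ℝ} (h₀ : 0 ≤ r) (h₁ : r < 1) :
    HasSum (fun n : ℕ => r ^ n * (1 - r)) 1 := by
  simpa [inv_mul_cancel₀ (sub_pos.2 h₁).ne'] using
    (hasSum_geometric_of_lt_one h₀ h₁).mul_right (1 - r)

lemma hasSum_integral_pow_mul_one_sub_smul {X E : Type*} [MeasurableSpace X] {μ : Measure X}
    [NormedAddCommGroup E] [NormedSpace ℝ E] {u : X → ℝ} {f : X → E}
    (hu : AEStronglyMeasurable u μ) (hu_mem : ∀ᵐ x ∂μ, u x ∈ Ico 0 1) (hf : Integrable f μ) :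
    HasSum (fun n : ℕ => ∫ x, (u x ^ n * (1 - u x)) • f x ∂μ) (∫ x, f x ∂μ) := by
  have hasSum_bound : ∀ᵐ x ∂μ, HasSum (fun n : ℕ => u x ^ n * (1 - u x) * ‖f x‖) ‖f x‖ := by
    filter_upwards [hu_mem] with x hx
    simpa only [one_mul] using (hasSum_pow_mul_one_sub hx.1 hx.2).mul_right ‖f x‖
  refine hasSum_integral_of_dominated_convergence
    (fun n x => u x ^ n * (1 - u x) * ‖f x‖) (fun n => ?_) (fun n => ?_)
    (hasSum_bound.mono fun x hx => hx.summable) ?_ ?_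
  · exact ((hu.pow n).mul (aestronglyMeasurable_const.sub hu)).smul hf.aestronglyMeasurable
  · filter_upwards [hu_mem] with x hx
    have nonneg : 0 ≤ u x ^ n * (1 - u x) := mul_nonneg (pow_nonneg hx.1 n) (sub_nonneg.2 hx.2.le)
    rw [norm_smul, Real.norm_of_nonneg nonneg]
  · exact hf.norm.congr (hasSum_bound.mono fun x hx => hx.tsum_eq.symm)
  · filter_upwards [hu_mem] with x hx
    simpa only [one_smul] using (hasSum_pow_mul_one_sub hx.1 hx.2).smul_const (f x)

lemma intervalIntegrable_rpow_mul_one_sub_rpow {α β : ℝ} (hα : 0 < α) (hβ : 0 < β) :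
    IntervalIntegrable (fun t : ℝ => t ^ (α - 1) * (1 - t) ^ (β - 1)) volume 0 1 := by
  have h := (Complex.betaIntegral_convergent (u := α) (v := β) (by simpa) (by simpa)).norm
  refine h.congr_uIoo fun t ht => ?_
  obtain ⟨ht₀, ht₁⟩ : t ∈ Ioo 0 1 := by rwa [uIoo_of_le zero_le_one] at ht
  have norm_left : ‖(t : ℂ) ^ ((α : ℂ) - 1)‖ = t ^ (α - 1) := by
    simp [Complex.norm_cpow_eq_rpow_re_of_pos ht₀]
  have norm_right : ‖(1 - t : ℂ) ^ ((β : ℂ) - 1)‖ = (1 - t) ^ (β - 1) := by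
    rw [← Complex.ofReal_one, ← Complex.ofReal_sub,
      Complex.norm_cpow_eq_rpow_re_of_pos (sub_pos.2 ht₁)]
    simp
  simp only [norm_mul, norm_left, norm_right]

/-- The integrand defining `mecbf`, named so that its dependence on `α` and `β` can be studied
pointwise on `(0, 1)`. -/
noncomputable def mecbfIntegrand (α β m t : ℝ) : ℝ :=
  t ^ (α - 1) * (1 - t) ^ (β - 1) * exp (m * t * (1 - t))

lemma mecbf_eq_setIntegral_Ioo (α β m : ℝ) :
    mecbf α β m = ∫ t in Ioo 0 1, mecbfIntegrand α β m t := by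
  rw [← integral_Ioc_eq_integral_Ioo, ← intervalIntegral.integral_of_le zero_le_one]
  rfl

lemma integrableOn_mecbfIntegrand {α β : ℝ} (hα : 0 < α) (hβ : 0 < β) (m : ℝ) :
    IntegrableOn (mecbfIntegrand α β m) (Ioo 0 1) := by
  rw [← intervalIntegrable_iff_integrableOn_Ioo_of_le zero_le_one]
  exact (intervalIntegrable_rpow_mul_one_sub_rpow hα hβ).mul_continuousOn
    (Continuous.continuousOn (by fun_prop))

lemma mecbfIntegrand_add_natCast_add_one (α β m : ℝ) (n : ℕ) {t : ℝ} (ht : t ∈ Ioo 0 1) :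
    mecbfIntegrand (α + n) (β + 1) m t = (t ^ n * (1 - t)) • mecbfIntegrand α β m t := by
  have rpow_left : t ^ (α + n - 1) = t ^ (α - 1) * t ^ n := by
    rw [add_sub_right_comm, rpow_add_natCast ht.1.ne']
  have rpow_right : (1 - t) ^ (β + 1 - 1) = (1 - t) ^ (β - 1) * (1 - t) := by
    rw [add_sub_right_comm, rpow_add_one (sub_pos.2 ht.2).ne']
  rw [mecbfIntegrand, mecbfIntegrand, rpow_left, rpow_right, smul_eq_mul]
  ring

lemma hasSum_mecbf_add_natCast_add_one {α β : ℝ} (hα : 0 < α) (hβ : 0 < β) (m : ℝ) :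
    HasSum (fun n : ℕ => mecbf (α + n) (β + 1) m) (mecbf α β m) := by
  have term_eq (n : ℕ) : mecbf (α + n) (β + 1) m =
      ∫ t in Ioo 0 1, (t ^ n * (1 - t)) • mecbfIntegrand α β m t := by
    rw [mecbf_eq_setIntegral_Ioo]
    exact setIntegral_congr_fun measurableSet_Ioo fun t ht =>
      mecbfIntegrand_add_natCast_add_one α β m n ht
  simp only [term_eq, mecbf_eq_setIntegral_Ioo α β m]
  exact hasSum_integral_pow_mul_one_sub_smul aestronglyMeasurable_id
    ((ae_restrict_mem measurableSet_Ioo).mono fun _ ht => Ioo_subset_Ico_self ht)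
    (integrableOn_mecbfIntegrand hα hβ m)

theorem mecbf_second_summation (α β m : ℝ) (hα : 0 < α) (hβ : 0 < β) :
    mecbf α β m = ∑' n : ℕ, mecbf (α + n) (β + 1) m :=
  (hasSum_mecbf_add_natCast_add_one hα hβ m).tsum_eq.symm
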